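/- In the finite KL-regularized contextual bandit setup with reward r : S×A → ℝ, suppose g : S×A → ℝ and b : S → ℝ satisfy g(s,a) − b(s) ≤ r(s,a) for all (s,a) ∈ S×A. Let π* = π_r and π_g be the Gibbs policies of r and g. Then J(π*) − J(π_g) ≤ η·Σ_{s∈S} ρ(s)·Σ_{a∈A} π*(a|s)·(r(s,a) − g(s,a) + b(s))². -/

import Mathlib

/-- The Gibbs policy of `g` relative to the reference policy `πref` with inverse
temperature `η`. -/
noncomputable def gibbs {S A : Type*} [Fintype A] (πref : S → A → ℝ) (η : ℝ)
    (g : S → A → ℝ) : S → A → ℝ :=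
  fun s a => πref s a * Real.exp (η * g s a) / ∑ a', πref s a' * Real.exp (η * g s a')

/-- The KL-regularized objective of a policy `π` with reward `r`. -/
noncomputable def Jkl {S A : Type*} [Fintype S] [Fintype A] (ρ : S → ℝ)
    (πref : S → A → ℝ) (η : ℝ) (r : S → A → ℝ) (π : S → A → ℝ) : ℝ :=
  ∑ s, ρ s * ∑ a, π s a * (r s a - η⁻¹ * Real.log (π s a / πref s a))

/-!
Shifting `g` by `b` does not change its Gibbs policy, so we may assume `b = 0` and
`Δ = r - g ≥ 0`. Fix a state, write `p = π_r`, `q = π_g`, and let `K = log Z_r - log Z_g`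
be the log-ratio of the partition functions. The suboptimality is `η⁻¹ K - ∑ q Δ`.
From `q = p exp (K - η Δ) ≥ p (1 + K - η Δ)`, summing gives `η⁻¹ K ≤ ∑ p Δ`; and since `Δ ≥ 0`
forces `K ≥ 0`, multiplying by `Δ` and summing gives `∑ p Δ - ∑ q Δ ≤ η ∑ p Δ²`.
-/

open Finset Real

section SingleState

variable {S A : Type*} [Fintype A]

/-- The partition function of the Gibbs policy of `g` at the state `s`, i.e. the normalizing
constant in `gibbs`. -/
noncomputable def partitionFunction (πref : S → A → ℝ) (η : ℝ) (g : S → A → ℝ) (s : S) : ℝ :=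
  ∑ a, πref s a * exp (η * g s a)

/-- The KL-regularized value of `policy` at the state `s`; its `ρ`-average is `Jkl`. -/
noncomputable def klValue (πref : S → A → ℝ) (η : ℝ) (r policy : S → A → ℝ) (s : S) : ℝ :=
  ∑ a, policy s a * (r s a - η⁻¹ * log (policy s a / πref s a))

lemma gibbs_sub_const (πref : S → A → ℝ) (η : ℝ) (g : S → A → ℝ) (b : S → ℝ) :
    gibbs πref η (fun s a => g s a - b s) = gibbs πref η g := by
  funext s a
  simp only [gibbs, mul_sub, exp_sub, ← mul_div_assoc, ← sum_div]
  exact div_div_div_cancel_right₀ (exp_ne_zero _) _ _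

variable {πref : S → A → ℝ} {η : ℝ} {r g : S → A → ℝ} {s : S}

lemma partitionFunction_pos (hnonneg : ∀ a, 0 ≤ πref s a) (hmass : 0 < ∑ a, πref s a) :
    0 < partitionFunction πref η g s := by
  obtain ⟨a, ha, hne⟩ := exists_ne_zero_of_sum_ne_zero hmass.ne'
  exact sum_pos' (fun a _ => mul_nonneg (hnonneg a) (exp_pos _).le)
    ⟨a, ha, mul_pos ((hnonneg a).lt_of_ne' hne) (exp_pos _)⟩

lemma partitionFunction_mono (hnonneg : ∀ a, 0 ≤ πref s a) (hη : 0 ≤ η)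
    (hle : ∀ a, g s a ≤ r s a) :
    partitionFunction πref η g s ≤ partitionFunction πref η r s := by
  unfold partitionFunction
  gcongr with a
  · exact hnonneg a
  · exact hle a

lemma gibbs_nonneg (hnonneg : ∀ a, 0 ≤ πref s a) (a : A) : 0 ≤ gibbs πref η g s a :=
  div_nonneg (mul_nonneg (hnonneg a) (exp_pos _).le)
    (sum_nonneg fun a _ => mul_nonneg (hnonneg a) (exp_pos _).le)

lemma sum_gibbs_eq_one (hZ : partitionFunction πref η g s ≠ 0) : ∑ a, gibbs πref η g s a = 1 := by
  simp only [gibbs, ← sum_div]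
  exact div_self hZ

lemma log_gibbs_div (hZ : partitionFunction πref η g s ≠ 0) {a : A} (ha : πref s a ≠ 0) :
    log (gibbs πref η g s a / πref s a) = η * g s a - log (partitionFunction πref η g s) := by
  have hratio : gibbs πref η g s a / πref s a =
      exp (η * g s a) / partitionFunction πref η g s := by
    rw [gibbs, div_right_comm, mul_div_cancel_left₀ _ ha, partitionFunction]
  rw [hratio, log_div (exp_ne_zero _) hZ, log_exp]

lemma gibbs_eq_gibbs_mul_exp (hZr : 0 < partitionFunction πref η r s)
    (hZg : 0 < partitionFunction πref η g s) (a : A) :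
    gibbs πref η g s a = gibbs πref η r s a *
      exp (log (partitionFunction πref η r s) - log (partitionFunction πref η g s) -
        η * (r s a - g s a)) := by
  rw [mul_sub, exp_sub, exp_sub, exp_sub, exp_log hZr, exp_log hZg]
  change _ / partitionFunction πref η g s = _ / partitionFunction πref η r s * _
  field_simp

lemma klValue_gibbs (hη : η ≠ 0) (hZ : partitionFunction πref η g s ≠ 0) :
    klValue πref η r (gibbs πref η g) s =
      η⁻¹ * log (partitionFunction πref η g s) +
        ∑ a, gibbs πref η g s a * (r s a - g s a) := by
  have hterm : ∀ a, gibbs πref η g s a *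
        (r s a - η⁻¹ * log (gibbs πref η g s a / πref s a)) =
      gibbs πref η g s a * (η⁻¹ * log (partitionFunction πref η g s)) +
        gibbs πref η g s a * (r s a - g s a) := by
    intro a
    by_cases ha : πref s a = 0
    · simp [gibbs, ha]
    · rw [log_gibbs_div hZ ha]
      field_simp
      ring
  rw [klValue, sum_congr rfl fun a _ => hterm a, sum_add_distrib, ← sum_mul,
    sum_gibbs_eq_one hZ, one_mul]

lemma gibbs_mul_one_add_sub_le_gibbs (hnonneg : ∀ a, 0 ≤ πref s a) (hmass : 0 < ∑ a, πref s a)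
    (a : A) :
    gibbs πref η r s a *
        (1 + (log (partitionFunction πref η r s) - log (partitionFunction πref η g s)) -
          η * (r s a - g s a)) ≤
      gibbs πref η g s a := by
  rw [gibbs_eq_gibbs_mul_exp (r := r) (g := g) (partitionFunction_pos hnonneg hmass)
    (partitionFunction_pos hnonneg hmass)]
  refine mul_le_mul_of_nonneg_left ?_ (gibbs_nonneg hnonneg a)
  rw [add_sub_assoc, add_comm]
  exact add_one_le_exp _

lemma log_partitionFunction_sub_le (hnonneg : ∀ a, 0 ≤ πref s a)
    (hmass : 0 < ∑ a, πref s a) :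
    log (partitionFunction πref η r s) - log (partitionFunction πref η g s) ≤
      η * ∑ a, gibbs πref η r s a * (r s a - g s a) := by
  have hsum := sum_le_sum fun a (_ : a ∈ univ) =>
    gibbs_mul_one_add_sub_le_gibbs (η := η) (r := r) (g := g) hnonneg hmass a
  simp only [mul_sub (gibbs πref η r s _) (1 + _), sum_sub_distrib, ← sum_mul,
    mul_left_comm _ η, ← mul_sum,
    sum_gibbs_eq_one (partitionFunction_pos hnonneg hmass).ne'] at hsum
  linarith

lemma sum_gibbs_mul_sub_sum_gibbs_mul_le (hnonneg : ∀ a, 0 ≤ πref s a)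
    (hmass : 0 < ∑ a, πref s a) (hη : 0 ≤ η) (hle : ∀ a, g s a ≤ r s a) :
    ∑ a, gibbs πref η r s a * (r s a - g s a) - ∑ a, gibbs πref η g s a * (r s a - g s a) ≤
      η * ∑ a, gibbs πref η r s a * (r s a - g s a) ^ 2 := by
  rw [← sum_sub_distrib, mul_sum]
  refine sum_le_sum fun a _ => ?_
  have hΔ : 0 ≤ r s a - g s a := sub_nonneg.2 (hle a)
  have hlog : 0 ≤ log (partitionFunction πref η r s) - log (partitionFunction πref η g s) :=
    sub_nonneg.2 <| log_le_log (partitionFunction_pos hnonneg hmass)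
      (partitionFunction_mono hnonneg hη hle)
  have hlower : gibbs πref η r s a * (1 - η * (r s a - g s a)) ≤ gibbs πref η g s a :=
    (mul_le_mul_of_nonneg_left (by linarith) (gibbs_nonneg hnonneg a)).trans
      (gibbs_mul_one_add_sub_le_gibbs hnonneg hmass a)
  linarith [mul_le_mul_of_nonneg_right hlower hΔ]

theorem klValue_gibbs_sub_klValue_gibbs_le (hnonneg : ∀ a, 0 ≤ πref s a)
    (hmass : 0 < ∑ a, πref s a) (hη : 0 < η) (hle : ∀ a, g s a ≤ r s a) :
    klValue πref η r (gibbs πref η r) s - klValue πref η r (gibbs πref η g) s ≤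
      η * ∑ a, gibbs πref η r s a * (r s a - g s a) ^ 2 := by
  have hZ (f : S → A → ℝ) : partitionFunction πref η f s ≠ 0 :=
    (partitionFunction_pos hnonneg hmass).ne'
  calc
    klValue πref η r (gibbs πref η r) s - klValue πref η r (gibbs πref η g) s
      = η⁻¹ * (log (partitionFunction πref η r s) - log (partitionFunction πref η g s)) -
          ∑ a, gibbs πref η g s a * (r s a - g s a) := by
        simp only [klValue_gibbs hη.ne' (hZ _), sub_self, mul_zero, sum_const_zero]
        ring
    _ ≤ ∑ a, gibbs πref η r s a * (r s a - g s a) -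
          ∑ a, gibbs πref η g s a * (r s a - g s a) := by
        gcongr
        exact (inv_mul_le_iff₀ hη).2 (log_partitionFunction_sub_le hnonneg hmass)
    _ ≤ η * ∑ a, gibbs πref η r s a * (r s a - g s a) ^ 2 :=
        sum_gibbs_mul_sub_sum_gibbs_mul_le hnonneg hmass hη.le hle

end SingleState

theorem stmt11_general {S A : Type*} [Fintype S] [Fintype A]
    (ρ : S → ℝ) (hρ : ∀ s, 0 ≤ ρ s)
    (πref : S → A → ℝ) (hnonneg : ∀ s a, 0 ≤ πref s a) (hmass : ∀ s, 0 < ∑ a, πref s a)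
    (η : ℝ) (hη : 0 < η) (r g : S → A → ℝ) (b : S → ℝ)
    (hpess : ∀ s a, g s a - b s ≤ r s a) :
    Jkl ρ πref η r (gibbs πref η r) - Jkl ρ πref η r (gibbs πref η g) ≤
      η * ∑ s, ρ s * ∑ a, gibbs πref η r s a * (r s a - g s a + b s) ^ 2 := by
  simp only [sub_add]
  rw [← gibbs_sub_const πref η g b, Jkl, Jkl, ← sum_sub_distrib, mul_sum]
  refine sum_le_sum fun s _ => ?_
  rw [← mul_sub, mul_left_comm]
  exact mul_le_mul_of_nonneg_left
    (klValue_gibbs_sub_klValue_gibbs_le (hnonneg s) (hmass s) hη (hpess s)) (hρ s)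

/-- Pessimism bound with a per-state bias: if `g(s,a) − b(s) ≤ r(s,a)` for all
`(s,a)`, then the suboptimality of the Gibbs policy of `g` is bounded by `η`
times the bias-corrected squared estimation error under `π* = π_r`. -/
theorem stmt11 {S A : Type*} [Fintype S] [Fintype A] [Nonempty S] [Nonempty A]
    (ρ : S → ℝ) (hρ0 : ∀ s, 0 ≤ ρ s) (hρ1 : ∑ s, ρ s = 1)
    (πref : S → A → ℝ) (hpos : ∀ s a, 0 < πref s a) (hsum : ∀ s, ∑ a, πref s a = 1)
    (η : ℝ) (hη : 0 < η) (r g : S → A → ℝ) (b : S → ℝ)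
    (hpess : ∀ s a, g s a - b s ≤ r s a) :
    Jkl ρ πref η r (gibbs πref η r) - Jkl ρ πref η r (gibbs πref η g) ≤
      η * ∑ s, ρ s * ∑ a, gibbs πref η r s a * (r s a - g s a + b s) ^ 2 :=
  stmt11_general ρ hρ0 πref (fun s a => (hpos s a).le) (fun s => by simp [hsum s]) η hη r g b hpess
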